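/- arXiv:2104.15120 — 2 statements merged into one kernel-verified Lean document; each statement's English description precedes it below -/
import Mathlib

section
/- Let m, n ≥ 1, set N = m + n, and let r be a planar empty rectangle in F' of width k ≥ 2, from a generator x to a generator y. Then there exist planar empty rectangles r1, r2, r3 in F', each of width strictly less than k, such that either the pairs (r, r1) and (r2, r3) form a square (with r1 from y to some generator w, r2 from x to some generator v, and r3 from v to w), or the pairs (r1, r) and (r2, r3) form a square (with r1 from some generator w to x, r2 from w to some generator v, and r3 from v to y). -/
/-- A rectangle `r(σ, i, j)` on the toroidal grid of size `N`: a flow from the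
generator `σ` to the generator `σ^{ij}`. -/
structure GridRect (N : ℕ) where
  perm : Equiv.Perm (Fin N)
  i : Fin N
  j : Fin N
  hij : i ≠ j

namespace GridRect

variable {N : ℕ}

/-- The ending generator `σ^{ij}` of the rectangle `r(σ, i, j)`. -/
def endPerm (r : GridRect N) : Equiv.Perm (Fin N) :=
  (Equiv.swap r.i r.j).trans r.perm

/-- The domain of the rectangle `r(σ,i,j)`: the indicator function of `C × R` where `C`
is the cyclic interval of columns from `i` to `j` and `R` is the cyclic interval of rows
from `σ(i)` to `σ(j)`. -/
def dom (r : GridRect N) (p : Fin N × Fin N) : ℕ :=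
  if (p.1 - r.i < r.j - r.i) ∧ (p.2 - r.perm r.i < r.perm r.j - r.perm r.i) then 1 else 0

/-- A rectangle is planar if `i < j` and `σ(i) < σ(j)`. -/
def Planar (r : GridRect N) : Prop := r.i < r.j ∧ r.perm r.i < r.perm r.j

/-- A planar rectangle is empty if no column strictly between `i` and `j` is sent strictly
between `σ(i)` and `σ(j)`. -/
def IsEmptyRect (r : GridRect N) : Prop :=
  ¬ ∃ c : Fin N, r.i < c ∧ c < r.j ∧ r.perm r.i < r.perm c ∧ r.perm c < r.perm r.j

/-- A planar rectangle is thin if `j = i + 1`. -/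
def Thin (r : GridRect N) : Prop := (r.j : ℕ) = (r.i : ℕ) + 1


/-- The width of a planar rectangle. -/
def width (r : GridRect N) : ℕ := (r.j : ℕ) - (r.i : ℕ)

end GridRect
/-- The pairs `(r1, r2)` and `(r3, r4)` form a square: they are distinct ordered pairs,
`r1 : x → y`, `r2 : y → z`, `r3 : x → y'`, `r4 : y' → z` with `z ≠ x`, and the domains
satisfy `D(r1) + D(r2) = D(r3) + D(r4)` pointwise. -/
def IsSquareOf {N : ℕ} (r1 r2 r3 r4 : GridRect N) : Prop :=
  (r1, r2) ≠ (r3, r4) ∧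
  r3.perm = r1.perm ∧
  r2.perm = r1.endPerm ∧
  r4.perm = r3.endPerm ∧
  r4.endPerm = r2.endPerm ∧
  r2.endPerm ≠ r1.perm ∧
  ∀ p : Fin N × Fin N, r1.dom p + r2.dom p = r3.dom p + r4.dom p

/-- The set `Σ` of generators `σ` (0-indexed: columns/rows `0,…,m+n−1`) with
`σ(j) ∈ {0,…,m}` for `j < m` and `σ(j) ∈ {m−1,…,m+n−1}` for `j ≥ m`. -/
def GenSet (m n : ℕ) : Set (Equiv.Perm (Fin (m + n))) :=
  {σ | ∀ j : Fin (m + n), ((j : ℕ) < m → (σ j : ℕ) ≤ m) ∧ (m ≤ (j : ℕ) → m ≤ (σ j : ℕ) + 1)}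

/-- The set `F'` of rectangles with both endpoint generators in `Σ`. -/
def FSet (m n : ℕ) : Set (GridRect (m + n)) :=
  {r | r.perm ∈ GenSet m n ∧ r.endPerm ∈ GenSet m n}

/-- The set of planar thin rectangles in `F'`. -/
def PTSet (m n : ℕ) : Set (GridRect (m + n)) :=
  {r | r ∈ FSet m n ∧ r.Planar ∧ r.Thin}

/-- The set of planar empty rectangles in `F'`. -/
def PESet (m n : ℕ) : Set (GridRect (m + n)) :=
  {r | r ∈ FSet m n ∧ r.Planar ∧ r.IsEmptyRect}


theorem fin_cyc_lt {N : ℕ} (p a b : Fin N) (h : a < b) :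
    (p - a < b - a) ↔ (a ≤ p ∧ p < b) := by
  have e2 : ((b - a : Fin N) : ℕ) = b - a := Fin.sub_val_of_le h.le
  rw [Fin.lt_def, e2]
  rcases le_or_gt a p with h1 | h1
  · rw [Fin.sub_val_of_le h1]
    simp only [Fin.le_def, Fin.lt_def] at *
    omega
  · rw [Fin.coe_sub_iff_lt.2 h1]
    have := p.2
    have := b.2
    simp only [Fin.le_def, Fin.lt_def] at *
    omega

theorem dom_planar {N : ℕ} (r : GridRect N) (h : r.Planar) (p : Fin N × Fin N) :
    r.dom p = if (r.i ≤ p.1 ∧ p.1 < r.j) ∧ (r.perm r.i ≤ p.2 ∧ p.2 < r.perm r.j) then 1 else 0 := by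
  unfold GridRect.dom
  simp only [fin_cyc_lt _ _ _ h.1, fin_cyc_lt _ _ _ h.2]

/-- Main construction when some column between is sent above the rectangle. -/
theorem decompose_above (m n : ℕ) (x : Equiv.Perm (Fin (m + n))) (i c j : Fin (m + n))
    (hij : i ≠ j) (hr : (⟨x, i, j, hij⟩ : GridRect (m + n)) ∈ FSet m n)
    (he : ∀ k, i < k → k < j → x k < x i ∨ x j < x k)
    (hic : i < c) (hcj : c < j) (hab : x i < x j) (hd : x j < x c)
    (hc : ∀ k, c < k → k < j → x k < x i) :
    ∃ r1 r2 r3 : GridRect (m + n),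
      (r1 ∈ FSet m n ∧ r1.Planar ∧ r1.IsEmptyRect ∧ r1.width < (j : ℕ) - i) ∧
      (r2 ∈ FSet m n ∧ r2.Planar ∧ r2.IsEmptyRect ∧ r2.width < (j : ℕ) - i) ∧
      (r3 ∈ FSet m n ∧ r3.Planar ∧ r3.IsEmptyRect ∧ r3.width < (j : ℕ) - i) ∧
      IsSquareOf r1 ⟨x, i, j, hij⟩ r2 r3 := by
  obtain ⟨hx, hy⟩ := hr
  simp only [GridRect.endPerm] at hx hy
  have hwi : ((Equiv.swap c j).trans x) i = x i := by
    simp [Equiv.swap_apply_of_ne_of_ne hic.ne hij]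
  have hwc : ((Equiv.swap c j).trans x) c = x j := by simp
  have hwj : ((Equiv.swap c j).trans x) j = x c := by simp
  have hwk : ∀ k, k ≠ c → k ≠ j → ((Equiv.swap c j).trans x) k = x k := by
    intro k h1 h2; simp [Equiv.swap_apply_of_ne_of_ne h1 h2]
  have hyi : ((Equiv.swap i j).trans x) i = x j := by simp
  have hyj : ((Equiv.swap i j).trans x) j = x i := by simp
  generalize hw : (Equiv.swap c j).trans x = w at *
  have hvi : ((Equiv.swap i c).trans w) i = x j := by simp [hwc]
  have hvc : ((Equiv.swap i c).trans w) c = x i := by simp [hwi]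
  have hvj : ((Equiv.swap i c).trans w) j = x c := by
    simp [Equiv.swap_apply_of_ne_of_ne hij.symm hcj.ne', hwj]
  have hvk : ∀ k, k ≠ i → k ≠ c → k ≠ j → ((Equiv.swap i c).trans w) k = x k := by
    intro k h0 h1 h2; simp [Equiv.swap_apply_of_ne_of_ne h0 h1, hwk k h1 h2]
  generalize hv : (Equiv.swap i c).trans w = v at *
  have ewx : (Equiv.swap c j).trans w = x := by
    rw [← hw]; ext k; simp
  have evy : (Equiv.swap c j).trans v = (Equiv.swap i j).trans x := by
    apply Equiv.ext
    intro k
    by_cases h1 : k = i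
    · subst h1; rw [hyi]; simp [Equiv.swap_apply_of_ne_of_ne hic.ne hij, hvi]
    by_cases h2 : k = j
    · subst h2; rw [hyj]; simp [hvc]
    by_cases h3 : k = c
    · subst h3; simp [hvj, Equiv.swap_apply_of_ne_of_ne h1 h2]
    · simp [Equiv.swap_apply_of_ne_of_ne h1 h2, Equiv.swap_apply_of_ne_of_ne h3 h2, hvk k h1 h3 h2]
  have xi := hx i
  have xj := hx j
  have xc := hx c
  have yi := hy i
  have yj := hy j
  rw [hyi] at yi
  rw [hyj] at yj
  have Hw : w ∈ GenSet m n := by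
    intro k
    by_cases h2 : k = j
    · subst h2; rw [hwj]; simp only [Fin.lt_def] at *; omega
    by_cases h3 : k = c
    · subst h3; rw [hwc]; simp only [Fin.lt_def] at *; omega
    rw [hwk k h3 h2]; exact hx k
  have Hv : v ∈ GenSet m n := by
    intro k
    by_cases h1 : k = i
    · subst h1; rw [hvi]; simp only [Fin.lt_def] at *; omega
    by_cases h2 : k = j
    · subst h2; rw [hvj]; simp only [Fin.lt_def] at *; omega
    by_cases h3 : k = c
    · subst h3; rw [hvc]; simp only [Fin.lt_def] at *; omega
    rw [hvk k h1 h3 h2]; exact hx k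
  have P1 : (⟨w, c, j, hcj.ne⟩ : GridRect (m + n)).Planar := by
    refine ⟨hcj, ?_⟩; simp only [hwc, hwj]; exact hd
  have P2 : (⟨w, i, c, hic.ne⟩ : GridRect (m + n)).Planar := by
    refine ⟨hic, ?_⟩; simp only [hwc, hwi]; exact hab
  have P3 : (⟨v, c, j, hcj.ne⟩ : GridRect (m + n)).Planar := by
    refine ⟨hcj, ?_⟩; simp only [hvc, hvj]; exact hab.trans hd
  have P : (⟨x, i, j, hij⟩ : GridRect (m + n)).Planar := ⟨hic.trans hcj, hab⟩
  refine ⟨⟨w, c, j, hcj.ne⟩, ⟨w, i, c, hic.ne⟩, ⟨v, c, j, hcj.ne⟩, ⟨⟨Hw, ?_⟩, P1, ?_, ?_⟩,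
    ⟨⟨Hw, ?_⟩, P2, ?_, ?_⟩, ⟨⟨Hv, ?_⟩, P3, ?_, ?_⟩, ?_⟩
  · simpa only [GridRect.endPerm, ewx] using hx
  · rintro ⟨k, h1, h2, h3, h4⟩
    simp only [hwc, hwj] at h1 h2 h3 h4
    rw [hwk k h1.ne' h2.ne] at h3
    exact absurd ((hc k h1 h2).trans hab) h3.not_gt
  · simp only [GridRect.width, Fin.lt_def] at *; omega
  · simpa only [GridRect.endPerm, hv] using Hv
  · rintro ⟨k, h1, h2, h3, h4⟩
    simp only [hwc, hwi] at h1 h2 h3 h4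
    rw [hwk k h2.ne (h2.trans hcj).ne] at h3 h4
    rcases he k h1 (h2.trans hcj) with h | h
    · exact absurd h h3.not_gt
    · exact absurd h h4.not_gt
  · simp only [GridRect.width, Fin.lt_def] at *; omega
  · simpa only [GridRect.endPerm, evy] using hy
  · rintro ⟨k, h1, h2, h3, h4⟩
    simp only [hvc, hvj] at h1 h2 h3 h4
    rw [hvk k (hic.trans h1).ne' h1.ne' h2.ne] at h3
    exact absurd (hc k h1 h2) h3.not_gt
  · simp only [GridRect.width, Fin.lt_def] at *; omega
  · refine ⟨?_, rfl, ?_, ?_, ?_, ?_, ?_⟩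
    · intro h
      have := congrArg (fun q : GridRect (m + n) × GridRect (m + n) => q.2.i) h
      exact hic.ne this
    · exact ewx.symm
    · exact hv.symm
    · exact evy
    · intro h
      have := congrArg (fun q : Equiv.Perm (Fin (m + n)) => q i) h
      simp only [GridRect.endPerm, hyi, hwi] at this
      exact hab.ne' this
    · intro p
      rw [dom_planar _ P, dom_planar _ P1, dom_planar _ P2, dom_planar _ P3]
      simp only [hwi, hwc, hwj, hvc, hvj]
      simp only [Fin.lt_def, Fin.le_def] at *
      clear * - hic hcj hab hd
      split_ifs <;> omega

/-- Main construction when some column between is sent below the rectangle. -/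
theorem decompose_below (m n : ℕ) (x : Equiv.Perm (Fin (m + n))) (i c j : Fin (m + n))
    (hij : i ≠ j) (hr : (⟨x, i, j, hij⟩ : GridRect (m + n)) ∈ FSet m n)
    (he : ∀ k, i < k → k < j → x k < x i ∨ x j < x k)
    (hic : i < c) (hcj : c < j) (hab : x i < x j) (hd : x c < x i)
    (hc : ∀ k, i < k → k < c → x j < x k) :
    ∃ r1 r2 r3 : GridRect (m + n),
      (r1 ∈ FSet m n ∧ r1.Planar ∧ r1.IsEmptyRect ∧ r1.width < (j : ℕ) - i) ∧
      (r2 ∈ FSet m n ∧ r2.Planar ∧ r2.IsEmptyRect ∧ r2.width < (j : ℕ) - i) ∧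
      (r3 ∈ FSet m n ∧ r3.Planar ∧ r3.IsEmptyRect ∧ r3.width < (j : ℕ) - i) ∧
      IsSquareOf r1 ⟨x, i, j, hij⟩ r2 r3 := by
  obtain ⟨hx, hy⟩ := hr
  simp only [GridRect.endPerm] at hx hy
  have hwi : ((Equiv.swap i c).trans x) i = x c := by simp
  have hwc : ((Equiv.swap i c).trans x) c = x i := by simp
  have hwj : ((Equiv.swap i c).trans x) j = x j := by
    simp [Equiv.swap_apply_of_ne_of_ne hij.symm hcj.ne']
  have hwk : ∀ k, k ≠ i → k ≠ c → ((Equiv.swap i c).trans x) k = x k := by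
    intro k h1 h2; simp [Equiv.swap_apply_of_ne_of_ne h1 h2]
  have hyi : ((Equiv.swap i j).trans x) i = x j := by simp
  have hyj : ((Equiv.swap i j).trans x) j = x i := by simp
  generalize hw : (Equiv.swap i c).trans x = w at *
  have hvi : ((Equiv.swap c j).trans w) i = x c := by
    simp [Equiv.swap_apply_of_ne_of_ne hic.ne hij, hwi]
  have hvc : ((Equiv.swap c j).trans w) c = x j := by simp [hwj]
  have hvj : ((Equiv.swap c j).trans w) j = x i := by simp [hwc]
  have hvk : ∀ k, k ≠ i → k ≠ c → k ≠ j → ((Equiv.swap c j).trans w) k = x k := by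
    intro k h0 h1 h2; simp [Equiv.swap_apply_of_ne_of_ne h1 h2, hwk k h0 h1]
  generalize hv : (Equiv.swap c j).trans w = v at *
  have ewx : (Equiv.swap i c).trans w = x := by
    rw [← hw]; ext k; simp
  have evy : (Equiv.swap i c).trans v = (Equiv.swap i j).trans x := by
    apply Equiv.ext
    intro k
    by_cases h1 : k = i
    · subst h1; rw [hyi]; simp [hvc]
    by_cases h2 : k = j
    · subst h2; rw [hyj]; simp [Equiv.swap_apply_of_ne_of_ne hij.symm hcj.ne', hvj]
    by_cases h3 : k = c
    · subst h3; simp [hvi, Equiv.swap_apply_of_ne_of_ne h1 h2]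
    · simp [Equiv.swap_apply_of_ne_of_ne h1 h2, Equiv.swap_apply_of_ne_of_ne h1 h3, hvk k h1 h3 h2]
  have xi := hx i
  have xj := hx j
  have xc := hx c
  have yi := hy i
  have yj := hy j
  rw [hyi] at yi
  rw [hyj] at yj
  have Hw : w ∈ GenSet m n := by
    intro k
    by_cases h2 : k = i
    · subst h2; rw [hwi]; simp only [Fin.lt_def] at *; omega
    by_cases h3 : k = c
    · subst h3; rw [hwc]; simp only [Fin.lt_def] at *; omega
    rw [hwk k h2 h3]; exact hx k
  have Hv : v ∈ GenSet m n := by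
    intro k
    by_cases h1 : k = i
    · subst h1; rw [hvi]; simp only [Fin.lt_def] at *; omega
    by_cases h2 : k = j
    · subst h2; rw [hvj]; simp only [Fin.lt_def] at *; omega
    by_cases h3 : k = c
    · subst h3; rw [hvc]; simp only [Fin.lt_def] at *; omega
    rw [hvk k h1 h3 h2]; exact hx k
  have P1 : (⟨w, i, c, hic.ne⟩ : GridRect (m + n)).Planar := by
    refine ⟨hic, ?_⟩; simp only [hwc, hwi]; exact hd
  have P2 : (⟨w, c, j, hcj.ne⟩ : GridRect (m + n)).Planar := by
    refine ⟨hcj, ?_⟩; simp only [hwc, hwj]; exact hab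
  have P3 : (⟨v, i, c, hic.ne⟩ : GridRect (m + n)).Planar := by
    refine ⟨hic, ?_⟩; simp only [hvc, hvi]; exact hd.trans hab
  have P : (⟨x, i, j, hij⟩ : GridRect (m + n)).Planar := ⟨hic.trans hcj, hab⟩
  refine ⟨⟨w, i, c, hic.ne⟩, ⟨w, c, j, hcj.ne⟩, ⟨v, i, c, hic.ne⟩, ⟨⟨Hw, ?_⟩, P1, ?_, ?_⟩,
    ⟨⟨Hw, ?_⟩, P2, ?_, ?_⟩, ⟨⟨Hv, ?_⟩, P3, ?_, ?_⟩, ?_⟩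
  · simpa only [GridRect.endPerm, ewx] using hx
  · rintro ⟨k, h1, h2, h3, h4⟩
    simp only [hwc, hwi] at h1 h2 h3 h4
    rw [hwk k h1.ne' h2.ne] at h4
    exact absurd (hab.trans (hc k h1 h2)) h4.not_gt
  · simp only [GridRect.width, Fin.lt_def] at *; omega
  · simpa only [GridRect.endPerm, hv] using Hv
  · rintro ⟨k, h1, h2, h3, h4⟩
    simp only [hwc, hwj] at h1 h2 h3 h4
    rw [hwk k (hic.trans h1).ne' h1.ne'] at h3 h4
    rcases he k (hic.trans h1) h2 with h | h
    · exact absurd h h3.not_gt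
    · exact absurd h h4.not_gt
  · simp only [GridRect.width, Fin.lt_def] at *; omega
  · simpa only [GridRect.endPerm, evy] using hy
  · rintro ⟨k, h1, h2, h3, h4⟩
    simp only [hvc, hvi] at h1 h2 h3 h4
    rw [hvk k h1.ne' h2.ne (h2.trans hcj).ne] at h4
    exact absurd (hc k h1 h2) h4.not_gt
  · simp only [GridRect.width, Fin.lt_def] at *; omega
  · refine ⟨?_, rfl, ?_, ?_, ?_, ?_, ?_⟩
    · intro h
      have := congrArg (fun q : GridRect (m + n) × GridRect (m + n) => q.1.i) h
      exact hic.ne this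
    · exact ewx.symm
    · exact hv.symm
    · exact evy
    · intro h
      have := congrArg (fun q : Equiv.Perm (Fin (m + n)) => q i) h
      simp only [GridRect.endPerm, hyi, hwi] at this
      exact (hd.trans hab).ne' this
    · intro p
      rw [dom_planar _ P, dom_planar _ P1, dom_planar _ P2, dom_planar _ P3]
      simp only [hwi, hwc, hwj, hvc, hvi]
      simp only [Fin.lt_def, Fin.le_def] at *
      clear * - hic hcj hab hd
      split_ifs <;> omega

/-- A planar empty rectangle in `F'` of width at least 2 can be written as part of a square
together with three planar empty rectangles in `F'` of strictly smaller width, either as the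
first flow of the first pair or as the second flow of the first pair. -/
theorem decompose_wide_rectangle (m n : ℕ) (hm : 1 ≤ m) (hn : 1 ≤ n)
    (r : GridRect (m + n)) (hr : r ∈ FSet m n) (hp : r.Planar) (he : r.IsEmptyRect)
    (hw : 2 ≤ r.width) :
    ∃ r1 r2 r3 : GridRect (m + n),
      (r1 ∈ FSet m n ∧ r1.Planar ∧ r1.IsEmptyRect ∧ r1.width < r.width) ∧
      (r2 ∈ FSet m n ∧ r2.Planar ∧ r2.IsEmptyRect ∧ r2.width < r.width) ∧
      (r3 ∈ FSet m n ∧ r3.Planar ∧ r3.IsEmptyRect ∧ r3.width < r.width) ∧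
      (IsSquareOf r r1 r2 r3 ∨ IsSquareOf r1 r r2 r3) := by
  obtain ⟨x, i, j, hij⟩ := r
  obtain ⟨h1, h2⟩ := hp
  simp only [GridRect.width] at h1 h2 hw ⊢
  have he' : ∀ k, i < k → k < j → x k < x i ∨ x j < x k := by
    intro k hk1 hk2
    by_contra! hcon
    refine he ⟨k, hk1, hk2, lt_of_le_of_ne hcon.1 ?_, lt_of_le_of_ne hcon.2 ?_⟩
    · exact fun h => hk1.ne (x.injective h)
    · exact fun h => hk2.ne (x.injective h)
  by_cases hA : ∃ c, (i < c ∧ c < j) ∧ x j < x c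
  · obtain ⟨c, ⟨⟨a1, a2⟩, a3⟩, hmax⟩ := Set.Finite.exists_maximal
      (Set.toFinite {c | (i < c ∧ c < j) ∧ x j < x c}) hA
    obtain ⟨r1, r2, r3, g1, g2, g3, g4⟩ := decompose_above m n x i c j hij hr he' a1 a2 h2 a3 (by
      intro k k1 k2
      rcases he' k (a1.trans k1) k2 with h | h
      · exact h
      · exact absurd (hmax ⟨⟨a1.trans k1, k2⟩, h⟩ k1.le) k1.not_ge)
    exact ⟨r1, r2, r3, g1, g2, g3, Or.inr g4⟩
  · push Not at hA
    have hlt : (i : ℕ) + 1 < m + n := by have := j.2; omega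
    have a1 : i < (⟨i + 1, hlt⟩ : Fin (m + n)) := by simp [Fin.lt_def]
    have a2 : (⟨i + 1, hlt⟩ : Fin (m + n)) < j := by simp only [Fin.lt_def]; omega
    have a3 : x ⟨i + 1, hlt⟩ < x i :=
      (he' _ a1 a2).resolve_right (hA _ ⟨a1, a2⟩).not_gt
    obtain ⟨r1, r2, r3, g1, g2, g3, g4⟩ := decompose_below m n x i _ j hij hr he' a1 a2 h2 a3 (by
      intro k k1 k2
      simp only [Fin.lt_def] at k1 k2
      omega)
    exact ⟨r1, r2, r3, g1, g2, g3, Or.inr g4⟩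
end

section
/- Let m, n ≥ 1 and set N = m + n. For any two generators σ, σ' in Σ there is a finite sequence σ = σ_0, σ_1, ..., σ_k = σ' of generators, all lying in Σ, such that for each t with 0 ≤ t < k there is a column c_t with 1 ≤ c_t ≤ N − 1 and σ_{t+1} = σ_t·τ_{c_t}. (That is, the graph with vertex set Σ and edges given by planar thin rectangles is connected.) -/
/-- The column `c` as an element of `Fin N`, given `c + 1 < N`. -/
def colFin {N : ℕ} (c : ℕ) (hc : c + 1 < N) : Fin N := ⟨c, Nat.lt_of_succ_lt hc⟩

/-- The column `c + 1` as an element of `Fin N`, given `c + 1 < N`. -/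
def colFin' {N : ℕ} (c : ℕ) (hc : c + 1 < N) : Fin N := ⟨c + 1, hc⟩

/-- The generator `σ·τ_c = σ^{c,c+1}`. -/
def tmul {N : ℕ} (σ : Equiv.Perm (Fin N)) (c : ℕ) (hc : c + 1 < N) : Equiv.Perm (Fin N) :=
  (Equiv.swap (colFin c hc) (colFin' c hc)).trans σ

/-- One step inside `GenSet`. -/
def GStep (m n : ℕ) (σ ρ : Equiv.Perm (Fin (m + n))) : Prop :=
  σ ∈ GenSet m n ∧ ρ ∈ GenSet m n ∧ ∃ (c : ℕ) (hc : c + 1 < m + n), ρ = tmul σ c hc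

theorem tmul_left {N : ℕ} (σ : Equiv.Perm (Fin N)) (c : ℕ) (hc : c + 1 < N) :
    tmul σ c hc (colFin c hc) = σ (colFin' c hc) := by
  simp [tmul]

theorem tmul_right {N : ℕ} (σ : Equiv.Perm (Fin N)) (c : ℕ) (hc : c + 1 < N) :
    tmul σ c hc (colFin' c hc) = σ (colFin c hc) := by
  simp [tmul]

theorem tmul_other {N : ℕ} (σ : Equiv.Perm (Fin N)) (c : ℕ) (hc : c + 1 < N) (j : Fin N)
    (h1 : j ≠ colFin c hc) (h2 : j ≠ colFin' c hc) : tmul σ c hc j = σ j := by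
  simp [tmul, Equiv.swap_apply_of_ne_of_ne h1 h2]

theorem tmul_tmul {N : ℕ} (σ : Equiv.Perm (Fin N)) (c : ℕ) (hc : c + 1 < N) :
    tmul (tmul σ c hc) c hc = σ := by
  ext j
  simp [tmul]

theorem GStep.symm {m n : ℕ} {σ ρ : Equiv.Perm (Fin (m + n))} (h : GStep m n σ ρ) :
    GStep m n ρ σ := by
  obtain ⟨h1, h2, c, hc, rfl⟩ := h
  exact ⟨h2, h1, c, hc, (tmul_tmul σ c hc).symm⟩

/-- Swapping a descent stays in `GenSet`. -/
theorem tmul_mem {m n : ℕ} {σ : Equiv.Perm (Fin (m + n))} (hσ : σ ∈ GenSet m n) (c : ℕ)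
    (hc : c + 1 < m + n) (hd : (σ (colFin' c hc) : ℕ) < σ (colFin c hc)) :
    tmul σ c hc ∈ GenSet m n := by
  intro j
  have ha := hσ (colFin c hc)
  have hb := hσ (colFin' c hc)
  have e1 : ((colFin c hc : Fin (m + n)) : ℕ) = c := rfl
  have e2 : ((colFin' c hc : Fin (m + n)) : ℕ) = c + 1 := rfl
  rw [e1] at ha
  rw [e2] at hb
  by_cases h1 : j = colFin c hc
  · subst h1
    rw [tmul_left, e1]
    omega
  · by_cases h2 : j = colFin' c hc
    · subst h2
      rw [tmul_right, e2]
      omega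
    · rw [tmul_other σ c hc j h1 h2]
      exact hσ j

/-- The potential decreased by bubble sort. -/
def pot {N : ℕ} (σ : Equiv.Perm (Fin N)) : ℤ := ∑ j : Fin N, ((N : ℤ) - (j : ℕ)) * ((σ j : ℕ) : ℤ)

theorem pot_nonneg {N : ℕ} (σ : Equiv.Perm (Fin N)) : 0 ≤ pot σ := by
  refine Finset.sum_nonneg fun j _ => mul_nonneg ?_ (by positivity)
  have := j.2
  omega

theorem pot_lt {N : ℕ} (σ : Equiv.Perm (Fin N)) (c : ℕ) (hc : c + 1 < N)
    (hd : (σ (colFin' c hc) : ℕ) < σ (colFin c hc)) : pot (tmul σ c hc) < pot σ := by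
  have hne : colFin c hc ≠ colFin' c hc := by
    simp [colFin, colFin']
  have : pot σ - pot (tmul σ c hc) = ((σ (colFin c hc) : ℕ) : ℤ) - (σ (colFin' c hc) : ℕ) := by
    unfold pot
    rw [← Finset.sum_sub_distrib, Fintype.sum_eq_add _ _ hne]
    · rw [tmul_left, tmul_right]
      simp only [colFin, colFin']
      push_cast
      ring
    · rintro x ⟨h1, h2⟩
      rw [tmul_other σ c hc x h1 h2]
      ring
  omega

theorem eq_one_of_no_descent {N : ℕ} (σ : Equiv.Perm (Fin N))
    (h : ∀ (c : ℕ) (hc : c + 1 < N), ¬ (σ (colFin' c hc) : ℕ) < σ (colFin c hc)) : σ = 1 := by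
  have key : ∀ (d i : ℕ) (hi : i + d < N), (σ ⟨i, by omega⟩ : ℕ) ≤ σ ⟨i + d, hi⟩ := by
    intro d
    induction d with
    | zero => intro i hi; exact le_refl _
    | succ d ih =>
      intro i hi
      exact (ih i (by omega)).trans (not_lt.mp (h (i + d) hi))
  have hm : Monotone σ := by
    intro i j hij
    obtain ⟨i, hi⟩ := i
    obtain ⟨j, hj⟩ := j
    obtain ⟨d, rfl⟩ := Nat.exists_eq_add_of_le (show i ≤ j from hij)
    exact key d i hj
  have hs : StrictMono σ := hm.strictMono_of_injective σ.injective
  have := Subsingleton.elim (hs.orderIsoOfSurjective σ σ.surjective) (OrderIso.refl (Fin N))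
  ext j
  have := DFunLike.congr_fun this j
  simpa using congrArg Fin.val this

theorem reach_one {m n : ℕ} (k : ℕ) : ∀ σ : Equiv.Perm (Fin (m + n)), (pot σ).toNat = k →
    σ ∈ GenSet m n → Relation.ReflTransGen (GStep m n) σ 1 := by
  induction k using Nat.strong_induction_on with
  | _ k ih =>
    intro σ hk hσ
    by_cases h : ∃ (c : ℕ) (hc : c + 1 < m + n), (σ (colFin' c hc) : ℕ) < σ (colFin c hc)
    · obtain ⟨c, hc, hd⟩ := h
      have h1 := pot_lt σ c hc hd
      have h2 := pot_nonneg (tmul σ c hc)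
      have hmem := tmul_mem hσ c hc hd
      exact Relation.ReflTransGen.head ⟨hσ, hmem, c, hc, rfl⟩ (ih _ (by omega) _ rfl hmem)
    · push Not at h
      rw [eq_one_of_no_descent σ fun c hc => not_lt.mpr (h c hc)]

/-- Any two generators in `Σ` are connected by a finite sequence of generators in `Σ`, each
obtained from the previous one by multiplication by an adjacent transposition `τ_c`; i.e. the
graph on `Σ` with edges the planar thin rectangles is connected. -/
theorem genset_graph_connected (m n : ℕ) (hm : 1 ≤ m) (hn : 1 ≤ n)
    (σ σ' : Equiv.Perm (Fin (m + n))) (hσ : σ ∈ GenSet m n) (hσ' : σ' ∈ GenSet m n) :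
    ∃ (k : ℕ) (f : ℕ → Equiv.Perm (Fin (m + n))),
      f 0 = σ ∧ f k = σ' ∧ (∀ t ≤ k, f t ∈ GenSet m n) ∧
      ∀ t < k, ∃ (c : ℕ) (hc : c + 1 < m + n), f (t + 1) = tmul (f t) c hc := by
  have hs : Std.Symm (GStep m n) := ⟨fun _ _ h => GStep.symm h⟩
  have h : Relation.ReflTransGen (GStep m n) σ σ' :=
    (reach_one _ σ rfl hσ).trans (Std.Symm.symm _ _ (reach_one _ σ' rfl hσ'))
  induction h using Relation.ReflTransGen.head_induction_on with
  | refl => exact ⟨0, fun _ => σ', rfl, rfl, fun _ _ => hσ', fun t ht => absurd ht (by omega)⟩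
  | @head a b hab _ ih =>
    obtain ⟨ha, hb, hstep⟩ := hab
    obtain ⟨k, f, h0, hk, hmem, hf⟩ := ih hb
    refine ⟨k + 1, fun t => Nat.casesOn t a f, rfl, hk, ?_, ?_⟩
    · intro t ht
      cases t with
      | zero => exact ha
      | succ t => exact hmem t (by omega)
    · intro t ht
      cases t with
      | zero =>
        obtain ⟨c, hc, e⟩ := hstep
        exact ⟨c, hc, h0.trans e⟩
      | succ t => exact hf t (by omega)
end
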